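/- arXiv:2308.16867 — 4 statements merged into one kernel-verified Lean document; each statement's English description precedes it below -/
import Mathlib

section
/- A topological space X is a uniformizable Alexandroff space if and only if the collection {V(a) : a ∈ X} of intersections of neighbourhoods is a partition of X into open subsets (each V(a) is open, and any two sets V(x), V(y) are either disjoint or equal). -/
open Set

variable {X : Type*}

/-- `V a` : the intersection of all open neighbourhoods of `a`. -/
def V [TopologicalSpace X] (a : X) : Set X :=
  ⋂₀ {U : Set X | IsOpen U ∧ a ∈ U}

/-- A topological space is uniformizable if its topology is induced by some
uniform structure. -/
def Uniformizable (X : Type*) [t : TopologicalSpace X] : Prop :=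
  ∃ u : UniformSpace X, u.toTopologicalSpace = t

theorem mem_V_iff_specializes [TopologicalSpace X] {x y : X} : y ∈ V x ↔ y ⤳ x := by
  simp only [V, mem_sInter, mem_ofPred_eq, and_imp, specializes_iff_forall_open]

theorem mem_V_self [TopologicalSpace X] (x : X) : x ∈ V x :=
  mem_V_iff_specializes.2 specializes_rfl

theorem V_eq_or_disjoint_of_r0Space [TopologicalSpace X] [R0Space X] (x y : X) :
    V x = V y ∨ Disjoint (V x) (V y) := by
  refine or_iff_not_imp_right.2 fun h => ?_
  obtain ⟨z, hzx, hzy⟩ := not_disjoint_iff.1 h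
  rw [mem_V_iff_specializes] at hzx hzy
  ext w
  simp only [mem_V_iff_specializes]
  exact ⟨fun hw => (hw.trans hzx.symm).trans hzy, fun hw => (hw.trans hzy.symm).trans hzx⟩

/-- If the sets `V a` form a partition into open sets, the topology is induced by the map `V`
into a discrete space. -/
theorem induced_V_bot_of_partition [t : TopologicalSpace X] (ho : ∀ a : X, IsOpen (V a))
    (hd : ∀ x y : X, V x = V y ∨ Disjoint (V x) (V y)) :
    TopologicalSpace.induced (V : X → Set X) ⊥ = t := by
  ext U
  rw [@isOpen_induced_iff _ _ ⊥]
  constructor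
  · rintro ⟨S, -, rfl⟩
    refine isOpen_iff_forall_mem_open.2 fun x hx => ⟨V x, fun y hy => ?_, ho x, mem_V_self x⟩
    have hyx : V y = V x := (hd y x).resolve_right (not_disjoint_iff.2 ⟨y, mem_V_self y, hy⟩)
    rwa [mem_preimage, hyx]
  · refine fun hU => ⟨V '' U, trivial, Subset.antisymm ?_ (subset_preimage_image V U)⟩
    rintro x ⟨u, hu, hux⟩
    exact (mem_V_iff_specializes.1 (hux ▸ mem_V_self x)).mem_open hU hu

/-- `X` is a uniformizable Alexandroff space iff `{V a : a ∈ X}` is a partition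
of `X` into open subsets (each `V a` is open, and any two such sets are either
equal or disjoint). -/
theorem stmt4 [TopologicalSpace X] :
    ((∀ a : X, IsOpen (V a)) ∧ Uniformizable X) ↔
      ((∀ a : X, IsOpen (V a)) ∧
        ∀ x y : X, V x = V y ∨ Disjoint (V x) (V y)) := by
  refine and_congr_right fun ho => ⟨?_, fun hd => ?_⟩
  · rintro ⟨u, rfl⟩
    exact V_eq_or_disjoint_of_r0Space
  · exact ⟨UniformSpace.comap V ⊥, induced_V_bot_of_partition ho hd⟩
end

section
/- A topological space X is a uniformizable Alexandroff space if and only if there exists a partition P of X such that the uniform structure F_P = {α ⊆ X × X : ⋃{D × D : D ∈ P} ⊆ α} induces the topology of X. -/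
open Set Topology

variable {X : Type*}

/-- The uniform structure `F_P` generated by the single entourage
`α₀ = ⋃ {D × D : D ∈ P}` associated with a collection `P` of subsets of `X`. -/
def FP (P : Set (Set X)) : Set (Set (X × X)) :=
  {α | (⋃ D ∈ P, D ×ˢ D) ⊆ α}

/-- The topology induced by the uniform structure `F_P`:
`U` is open iff for every `x ∈ U` there is an entourage `α ∈ F_P` with `α[x] ⊆ U`. -/
def FPtop (P : Set (Set X)) : TopologicalSpace X where
  IsOpen U := ∀ x ∈ U, ∃ α ∈ FP P, {y | (x, y) ∈ α} ⊆ U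
  isOpen_univ := fun _ _ => ⟨Set.univ, Set.subset_univ _, fun _ _ => trivial⟩
  isOpen_inter := by
    intro U W hU hW x hx
    obtain ⟨α, hα, hαU⟩ := hU x hx.1
    obtain ⟨β, hβ, hβW⟩ := hW x hx.2
    exact ⟨α ∩ β, Set.subset_inter hα hβ, fun y hy => ⟨hαU hy.1, hβW hy.2⟩⟩
  isOpen_sUnion := by
    intro S hS x hx
    obtain ⟨U, hU, hxU⟩ := hx
    obtain ⟨α, hα, h⟩ := hS U hU x hxU
    exact ⟨α, hα, fun y hy => ⟨U, hU, h hy⟩⟩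

/-- A set is open for the topology of `F_P` iff it contains every block of `P` it meets. -/
theorem isOpen_FPtop_iff {P : Set (Set X)} {U : Set X} :
    IsOpen[FPtop P] U ↔ ∀ D ∈ P, ∀ x ∈ D, x ∈ U → D ⊆ U := by
  constructor
  · intro h D hD x hxD hxU y hyD
    obtain ⟨α, hα, hαU⟩ := h x hxU
    exact hαU (hα (mem_biUnion hD ⟨hxD, hyD⟩))
  · intro h x hxU
    refine ⟨_, Subset.rfl, fun y hy => ?_⟩
    obtain ⟨D, hD, hxD, hyD⟩ := mem_iUnion₂.1 hy
    exact h D hD x hxD hxU hyD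

/-- The topology of `F_P` is Alexandroff. -/
theorem isOpen_V_FPtop (P : Set (Set X)) (a : X) : IsOpen[FPtop P] (@V X (FPtop P) a) :=
  isOpen_FPtop_iff.2 fun D hD x hxD hx _ hyD U hU =>
    isOpen_FPtop_iff.1 hU.1 D hD x hxD (hx U hU) hyD

/-- The topology of `F_P` is uniformizable when `P` is a partition: it is induced by the
projection onto the discrete quotient. -/
theorem uniformizable_FPtop {P : Set (Set X)} (hP : Setoid.IsPartition P) :
    @Uniformizable X (FPtop P) := by
  let r : Setoid X := Setoid.mkClasses P hP.2
  have hr (x y : X) : r x y ↔ ∃ D ∈ P, x ∈ D ∧ y ∈ D := by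
    conv_rhs => rw [← Setoid.classes_mkClasses P hP]
    exact Setoid.rel_iff_exists_classes r
  refine ⟨UniformSpace.comap (Quotient.mk r) ⊥, TopologicalSpace.ext_iff.2 fun U => ?_⟩
  rw [isOpen_FPtop_iff]
  change (∃ s, _ ∧ Quotient.mk r ⁻¹' s = U) ↔ _
  constructor
  · rintro ⟨s, -, rfl⟩ D hD x hxD hxs y hyD
    have hxy : Quotient.mk r x = Quotient.mk r y := Quotient.sound ((hr x y).2 ⟨D, hD, hxD, hyD⟩)
    exact mem_preimage.2 (hxy ▸ hxs)
  · intro h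
    refine ⟨Quotient.mk r '' U, trivial, Subset.antisymm ?_ (subset_preimage_image _ _)⟩
    rintro y ⟨x, hxU, hxy⟩
    obtain ⟨D, hD, hxD, hyD⟩ := (hr x y).1 (Quotient.exact hxy)
    exact h D hD x hxD hxU hyD

/-- In an Alexandroff R₀ space, the inseparability classes induce the topology. -/
theorem FPtop_classes_inseparable [t : TopologicalSpace X] [R0Space X]
    (hV : ∀ a : X, IsOpen (V a)) : FPtop (inseparableSetoid X).classes = t := by
  refine TopologicalSpace.ext_iff.2 fun U => ?_
  rw [isOpen_FPtop_iff]
  constructor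
  · intro h
    refine isOpen_iff_forall_mem_open.2 fun x hxU => ⟨V x, ?_, hV x, fun U hU => hU.2⟩
    intro y hy
    have hyx : Inseparable y x :=
      (specializes_iff_forall_open.2 fun W hW hxW => hy W ⟨hW, hxW⟩ : y ⤳ x).inseparable
    exact h _ ((inseparableSetoid X).mem_classes x) x ((inseparableSetoid X).refl x) hxU hyx
  · rintro hU _ ⟨z, rfl⟩ x hx hxU y hy
    have hxz : Inseparable x z := hx
    have hyz : Inseparable y z := hy
    exact ((hxz.trans hyz.symm).mem_open_iff hU).1 hxU

/-- `X` is a uniformizable Alexandroff space iff there is a partition `P` of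
`X` such that the topology induced by the uniform structure `F_P` coincides
with the topology of `X`. -/
theorem stmt5 [t : TopologicalSpace X] :
    ((∀ a : X, IsOpen (V a)) ∧ Uniformizable X) ↔
      ∃ P : Set (Set X), Setoid.IsPartition P ∧ FPtop P = t := by
  constructor
  · rintro ⟨hV, u, rfl⟩
    exact ⟨_, Setoid.isPartition_classes _, FPtop_classes_inseparable hV⟩
  · rintro ⟨P, hP, rfl⟩
    exact ⟨isOpen_V_FPtop P, uniformizable_FPtop hP⟩
end

section
/- A topological space X is both functional Alexandroff and uniformizable if and only if there exists a self-map f : X → X such that every point of X is a periodic point of f (Per(f) = X) and the topology of X equals the functional Alexandroff topology corresponding to f. -/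
open Set

variable {X : Type*}

/-- `Vf f a = ⋃ₙ f⁻ⁿ(a)` : the union of the preimages of `{a}` under all
iterates of `f` (including the 0-th iterate). -/
def Vf (f : X → X) (a : X) : Set X :=
  ⋃ n : ℕ, (f^[n]) ⁻¹' {a}

/-- The functional Alexandroff topology on `X` corresponding to `f`, generated
by the basis `{Vf f a : a ∈ X}`. -/
def funcAlexTop (f : X → X) : TopologicalSpace X :=
  TopologicalSpace.generateFrom {S : Set X | ∃ a : X, S = Vf f a}

/-- A topological space is functional Alexandroff if its topology is the
functional Alexandroff topology corresponding to some self-map. -/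
def IsFunctionalAlexandroff (X : Type*) [t : TopologicalSpace X] : Prop :=
  ∃ f : X → X, t = funcAlexTop f

open scoped Topology

theorem mem_Vf {f : X → X} {a x : X} : x ∈ Vf f a ↔ ∃ n : ℕ, f^[n] x = a := by
  simp [Vf]

theorem isOpen_Vf (f : X → X) (a : X) : IsOpen[funcAlexTop f] (Vf f a) :=
  TopologicalSpace.isOpen_generateFrom_of_mem ⟨a, rfl⟩

/-- Open sets of the functional Alexandroff topology are closed under taking preimages. -/
theorem mem_of_apply_mem {f : X → X} {U : Set X} (hU : IsOpen[funcAlexTop f] U) {x : X}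
    (hx : f x ∈ U) : x ∈ U := by
  induction hU with
  | basic s hs =>
    obtain ⟨a, rfl⟩ := hs
    obtain ⟨n, hn⟩ := mem_Vf.1 hx
    exact mem_Vf.2 ⟨n + 1, hn⟩
  | univ => trivial
  | inter s t _ _ ihs iht => exact ⟨ihs hx.1, iht hx.2⟩
  | sUnion S _ ih =>
    obtain ⟨s, hs, hxs⟩ := hx
    exact ⟨s, hs, ih s hs hxs⟩

theorem Vf_subset_of_mem {f : X → X} {U : Set X} (hU : ∀ x, f x ∈ U → x ∈ U) {a : X}
    (ha : a ∈ U) : Vf f a ⊆ U := by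
  intro x hx
  obtain ⟨n, hn⟩ := mem_Vf.1 hx
  induction n generalizing x with
  | zero => exact (show x = a from hn) ▸ ha
  | succ n ih => exact hU x (ih (mem_Vf.2 ⟨n, hn⟩) hn)

theorem isOpen_funcAlexTop_iff {f : X → X} {U : Set X} :
    IsOpen[funcAlexTop f] U ↔ ∀ x, f x ∈ U → x ∈ U := by
  refine ⟨fun hU x => mem_of_apply_mem hU, fun h => ?_⟩
  have hU : U = ⋃₀ {S | ∃ a ∈ U, S = Vf f a} := by
    refine Subset.antisymm (fun a ha => ⟨Vf f a, ⟨a, ha, rfl⟩, mem_Vf.2 ⟨0, rfl⟩⟩) ?_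
    rintro x ⟨_, ⟨a, ha, rfl⟩, hx⟩
    exact Vf_subset_of_mem h ha hx
  rw [hU]
  refine @isOpen_sUnion X (funcAlexTop f) _ ?_
  rintro _ ⟨a, -, rfl⟩
  exact isOpen_Vf f a

/-- If every point is periodic, open sets of the functional Alexandroff topology are closed. -/
theorem isClosed_of_isOpen_of_periodic {f : X → X} (hf : ∀ x, ∃ n : ℕ, 0 < n ∧ f^[n] x = x)
    {U : Set X} (hU : IsOpen[funcAlexTop f] U) : IsClosed[funcAlexTop f] U := by
  refine (@isOpen_compl_iff X U (funcAlexTop f)).1 (isOpen_funcAlexTop_iff.2 fun x hfx hx => hfx ?_)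
  obtain ⟨n, hn, hnx⟩ := hf x
  refine Vf_subset_of_mem (fun _ => mem_of_apply_mem hU) hx (mem_Vf.2 ⟨n - 1, ?_⟩)
  rw [← Function.iterate_succ_apply, Nat.succ_eq_add_one, Nat.sub_add_cancel hn, hnx]

/-- A space whose open sets are all closed is uniformizable. -/
theorem uniformizable_of_isOpen_imp_isClosed [TopologicalSpace X]
    (h : ∀ U : Set X, IsOpen U → IsClosed U) : Uniformizable X := by
  have : CompletelyRegularSpace X := by
    refine ⟨fun x K hK hx => ?_⟩
    have hKo : IsOpen K := isClosed_compl_iff.1 (h _ hK.isOpen_compl)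
    refine ⟨K.indicator 1, ?_, by simp [hx], fun y hy => by simp [hy]⟩
    exact IsClopen.continuous_indicator ⟨hK, hKo⟩ continuous_const
  exact CompletelyRegularSpace.exists_uniformSpace

/-- If a functional Alexandroff topology is uniformizable, every point is periodic. -/
theorem periodic_of_uniformSpace {f : X → X} (u : UniformSpace X)
    (hu : u.toTopologicalSpace = funcAlexTop f) (x : X) : ∃ n : ℕ, 0 < n ∧ f^[n] x = x := by
  have hs : x ⤳ f x := by
    refine specializes_iff_forall_open.2 fun U hU hx => ?_
    rw [hu] at hU
    exact mem_of_apply_mem hU hx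
  have hV : IsOpen (Vf f x) := by
    rw [hu]
    exact isOpen_Vf f x
  obtain ⟨n, hn⟩ := mem_Vf.1 (hs.symm.mem_open hV (mem_Vf.2 ⟨0, rfl⟩))
  exact ⟨n + 1, n.succ_pos, hn⟩

/-- `X` is both functional Alexandroff and uniformizable iff there is a
self-map `f : X → X` all of whose points are periodic (`Per f = X`) such that
the topology of `X` is the functional Alexandroff topology corresponding to `f`. -/
theorem stmt12 [t : TopologicalSpace X] :
    (IsFunctionalAlexandroff X ∧ Uniformizable X) ↔
      ∃ f : X → X, (∀ x : X, ∃ n : ℕ, 0 < n ∧ f^[n] x = x) ∧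
        t = funcAlexTop f := by
  constructor
  · rintro ⟨⟨f, hf⟩, u, hu⟩
    exact ⟨f, periodic_of_uniformSpace u (hu.trans hf), hf⟩
  · rintro ⟨f, hper, rfl⟩
    exact ⟨⟨f, rfl⟩, @uniformizable_of_isOpen_imp_isClosed X (funcAlexTop f)
      fun _ => isClosed_of_isOpen_of_periodic hper⟩
end

section
/- For any nonempty set X, there is a one-to-one correspondence (bijection) between the family of all topologies on X that are both Alexandroff and uniformizable and the family of all partitions of X; the correspondence sends a partition P to the topology induced by the uniform structure F_P = {α ⊆ X × X : ⋃{D × D : D ∈ P} ⊆ α}, whose family of smallest open neighbourhoods is exactly P. -/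
open Set Topology

variable {X : Type*}

/-- `VT t a` : the intersection of all `t`-open neighbourhoods of `a`. -/
def VT (t : TopologicalSpace X) (a : X) : Set X :=
  ⋂₀ {U : Set X | IsOpen[t] U ∧ a ∈ U}

/-- A topology `t` on `X` is uniformizable if it is induced by some uniform
structure. -/
def UniformizableTop {X : Type*} (t : TopologicalSpace X) : Prop :=
  ∃ u : UniformSpace X, u.toTopologicalSpace = t

theorem Setoid.IsPartition.eq_of_mem_of_mem {P : Set (Set X)} (hP : Setoid.IsPartition P)
    {D E : Set X} {x : X} (hD : D ∈ P) (hE : E ∈ P) (hxD : x ∈ D) (hxE : x ∈ E) : D = E :=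
  (hP.2 x).unique ⟨hD, hxD⟩ ⟨hE, hxE⟩

theorem Setoid.IsPartition.isOpen_FPtop {P : Set (Set X)} (hP : Setoid.IsPartition P)
    {D : Set X} (hD : D ∈ P) : IsOpen[FPtop P] D :=
  isOpen_FPtop_iff.2 fun _ hE _ hxE hxD => (hP.eq_of_mem_of_mem hE hD hxE hxD).subset

theorem Setoid.IsPartition.VT_FPtop {P : Set (Set X)} (hP : Setoid.IsPartition P)
    {D : Set X} (hD : D ∈ P) {x : X} (hx : x ∈ D) : VT (FPtop P) x = D :=
  Subset.antisymm (sInter_subset_of_mem ⟨hP.isOpen_FPtop hD, hx⟩)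
    (subset_sInter fun _ hU => isOpen_FPtop_iff.1 hU.1 D hD x hx hU.2)

theorem Setoid.IsPartition.setOf_VT_FPtop {P : Set (Set X)} (hP : Setoid.IsPartition P) :
    {S : Set X | ∃ x : X, S = VT (FPtop P) x} = P := by
  ext S
  constructor
  · rintro ⟨x, rfl⟩
    obtain ⟨D, ⟨hD, hx⟩, -⟩ := hP.2 x
    rwa [hP.VT_FPtop hD hx]
  · intro hS
    obtain ⟨x, hx⟩ := nonempty_iff_ne_empty.2 (ne_of_mem_of_not_mem hS hP.1)
    exact ⟨x, (hP.VT_FPtop hS hx).symm⟩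

theorem Setoid.IsPartition.isOpen_VT_FPtop {P : Set (Set X)} (hP : Setoid.IsPartition P) (a : X) :
    IsOpen[FPtop P] (VT (FPtop P) a) := by
  obtain ⟨D, ⟨hD, ha⟩, -⟩ := hP.2 a
  rw [hP.VT_FPtop hD ha]
  exact hP.isOpen_FPtop hD

theorem Setoid.IsPartition.uniformizableTop_FPtop {P : Set (Set X)} (hP : Setoid.IsPartition P) :
    UniformizableTop (FPtop P) := by
  let c : UniformSpace.Core X :=
    { uniformity := Filter.principal (⋃ D ∈ P, D ×ˢ D)
      refl := by
        rw [Filter.principal_mono]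
        rintro ⟨x, y⟩ rfl
        obtain ⟨D, ⟨hD, hx⟩, -⟩ := hP.2 x
        exact mem_biUnion hD ⟨hx, hx⟩
      symm := by
        rw [Filter.tendsto_principal_principal]
        rintro ⟨x, y⟩ h
        obtain ⟨D, hD, hx, hy⟩ := mem_iUnion₂.1 h
        exact mem_biUnion hD ⟨hy, hx⟩
      comp := by
        refine (Filter.lift'_le (Filter.mem_principal_self _) ?_)
        rw [Filter.principal_mono]
        rintro ⟨x, z⟩ ⟨y, hxy, hyz⟩
        obtain ⟨D, hD, hx, hy⟩ := mem_iUnion₂.1 hxy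
        obtain ⟨E, hE, hy', hz⟩ := mem_iUnion₂.1 hyz
        obtain rfl := hP.eq_of_mem_of_mem hD hE hy hy'
        exact mem_biUnion hD ⟨hx, hz⟩ }
  refine ⟨UniformSpace.ofCore c, TopologicalSpace.ext_iff.2 fun U => ?_⟩
  let := UniformSpace.ofCore c
  rw [isOpen_FPtop_iff]
  refine isOpen_uniformity.trans ?_
  change (∀ x ∈ U, {p : X × X | p.1 = x → p.2 ∈ U} ∈
    Filter.principal (⋃ D ∈ P, D ×ˢ D)) ↔ _
  simp only [Filter.mem_principal]
  constructor
  · intro h D hD x hxD hxU y hy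
    exact @h x hxU (x, y) (mem_biUnion hD ⟨hxD, hy⟩) rfl
  · rintro h x hx ⟨_, y⟩ hp rfl
    obtain ⟨D, hD, hxD, hy⟩ := mem_iUnion₂.1 hp
    exact h D hD _ hxD hx hy

theorem mem_VT_self (t : TopologicalSpace X) (a : X) : a ∈ VT t a :=
  fun _ hU => hU.2

theorem mem_VT_iff_specializes [t : TopologicalSpace X] {a b : X} : b ∈ VT t a ↔ b ⤳ a := by
  simp [VT, specializes_iff_forall_open]

theorem VT_eq_of_mem [t : TopologicalSpace X] [R0Space X] {a b : X} (h : b ∈ VT t a) :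
    VT t a = VT t b := by
  ext c
  rw [mem_VT_iff_specializes] at h
  simp only [mem_VT_iff_specializes]
  exact ⟨fun hc => hc.trans h.symm, fun hc => hc.trans h⟩

theorem isPartition_range_VT [t : TopologicalSpace X] [R0Space X] :
    Setoid.IsPartition (range (VT t)) := by
  refine ⟨?_, fun a => ⟨VT t a, ⟨mem_range_self a, mem_VT_self t a⟩, ?_⟩⟩
  · rintro ⟨a, ha⟩
    exact (ha ▸ mem_VT_self t a : a ∈ (∅ : Set X))
  · rintro _ ⟨⟨b, rfl⟩, hb⟩
    exact VT_eq_of_mem hb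

theorem FPtop_range_VT [t : TopologicalSpace X] [R0Space X] (ht : ∀ a, IsOpen (VT t a)) :
    FPtop (range (VT t)) = t := by
  refine TopologicalSpace.ext_iff.2 fun U => isOpen_FPtop_iff.trans ⟨fun h => ?_, ?_⟩
  · exact isOpen_iff_forall_mem_open.2 fun x hx =>
      ⟨VT t x, h _ (mem_range_self x) x (mem_VT_self t x) hx, ht x, mem_VT_self t x⟩
  · rintro hU _ ⟨a, rfl⟩ x hxa hxU
    rw [VT_eq_of_mem hxa]
    exact sInter_subset_of_mem ⟨hU, hxU⟩

theorem UniformizableTop.r0Space {t : TopologicalSpace X} (ht : UniformizableTop t) :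
    R0Space X := by
  obtain ⟨u, rfl⟩ := ht
  infer_instance

/-- For a nonempty set `X`, there is a bijection between the partitions of `X`
and the topologies on `X` that are both Alexandroff and uniformizable; the
bijection sends a partition `P` to the topology induced by the uniform
structure `F_P`, and the family of smallest open neighbourhoods of that
topology is exactly `P`. -/
theorem stmt19 (X : Type*) (hX : Nonempty X) :
    ∃ e : {P : Set (Set X) // Setoid.IsPartition P} ≃
        {t : TopologicalSpace X //
          (∀ a : X, IsOpen[t] (VT t a)) ∧ UniformizableTop t},
      ∀ P : {P : Set (Set X) // Setoid.IsPartition P},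
        (e P : TopologicalSpace X) = FPtop P.1 ∧
        {S : Set X | ∃ x : X, S = VT (FPtop P.1) x} = P.1 := by
  let f : {P : Set (Set X) // Setoid.IsPartition P} →
      {t : TopologicalSpace X // (∀ a : X, IsOpen[t] (VT t a)) ∧ UniformizableTop t} :=
    fun P => ⟨FPtop P.1, P.2.isOpen_VT_FPtop, P.2.uniformizableTop_FPtop⟩
  have hf : Function.Bijective f := by
    constructor
    · intro P Q h
      have h' : FPtop P.1 = FPtop Q.1 := congrArg Subtype.val h
      exact Subtype.ext (by rw [← P.2.setOf_VT_FPtop, h', Q.2.setOf_VT_FPtop])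
    · rintro ⟨t, hopen, hunif⟩
      have := hunif.r0Space
      exact ⟨⟨range (VT t), isPartition_range_VT⟩, Subtype.ext (FPtop_range_VT hopen)⟩
  exact ⟨Equiv.ofBijective f hf, fun P => ⟨rfl, P.2.setOf_VT_FPtop⟩⟩
end
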